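/- arXiv:2509.02212 — 4 statements merged into one kernel-verified Lean document; each statement's English description precedes it below -/
import Mathlib

section
/- Let H and U be real Hilbert spaces, B : U → H a bounded linear operator with adjoint B* : H → U, μ ∈ (0,1), and β > 0 such that ‖B*y‖² ≥ β‖y‖² for all y ∈ H. Let G : H → H be defined by G(y) = ‖B*y‖^{−μ} B B* y if B*y ≠ 0 and G(y) = 0 if B*y = 0. Let A₀ : H → H satisfy ⟨x, A₀x⟩ ≤ 0 for all x ∈ H, and let f : H → ℝ satisfy f(x) ≤ 0 for all x ∈ H. Suppose y : [0,∞) → H is differentiable and satisfies the closed-loop dynamics y'(t) = A₀(y(t)) + f(y(t))·y(t) − G(y(t)) for all t ≥ 0. Then, setting T = ‖y(0)‖^μ / (β^{1−μ/2} μ), one has ‖y(t)‖^μ ≤ ‖y(0)‖^μ − β^{1−μ/2} μ t for all t ∈ [0, T], and y(t) = 0 for all t ≥ T. -/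
open scoped RealInnerProductSpace Classical

/-- Finite-time stabilization of the closed-loop nonlinear system
`y' = A₀ y + f(y) y − G(y)` with the feedback operator
`G(y) = ‖B*y‖^{-μ} B B* y` (and `G(y) = 0` when `B*y = 0`). -/
theorem finite_time_stabilization_nonlinear
    {H U : Type*} [NormedAddCommGroup H] [InnerProductSpace ℝ H] [CompleteSpace H]
    [NormedAddCommGroup U] [InnerProductSpace ℝ U] [CompleteSpace U]
    (B : U →L[ℝ] H) (μ β : ℝ) (hμ : μ ∈ Set.Ioo (0 : ℝ) 1) (hβ : 0 < β)
    (hB : ∀ y : H, β * ‖y‖ ^ 2 ≤ ‖(ContinuousLinearMap.adjoint B) y‖ ^ 2)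
    (G : H → H)
    (hG : ∀ y : H, G y =
      if (ContinuousLinearMap.adjoint B) y ≠ 0 then
        (‖(ContinuousLinearMap.adjoint B) y‖ ^ (-μ)) • B ((ContinuousLinearMap.adjoint B) y)
      else 0)
    (A₀ : H → H) (hA₀ : ∀ x : H, ⟪x, A₀ x⟫ ≤ 0)
    (f : H → ℝ) (hf : ∀ x : H, f x ≤ 0)
    (y : ℝ → H)
    (hy : ∀ t : ℝ, 0 ≤ t → HasDerivAt y (A₀ (y t) + f (y t) • y t - G (y t)) t)
    (T : ℝ) (hT : T = ‖y 0‖ ^ μ / (β ^ (1 - μ / 2) * μ)) :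
    (∀ t ∈ Set.Icc (0 : ℝ) T, ‖y t‖ ^ μ ≤ ‖y 0‖ ^ μ - β ^ (1 - μ / 2) * μ * t) ∧
    (∀ t : ℝ, T ≤ t → y t = 0) := by
  obtain ⟨hμ0, hμ1⟩ := hμ
  have hc : 0 < β ^ (1 - μ / 2) := Real.rpow_pos_of_pos hβ _
  have hp : 0 < 1 - μ / 2 := by linarith
  have hin : ∀ x : H, β ^ (1 - μ / 2) * (‖x‖ ^ 2) ^ (1 - μ / 2) ≤ ⟪x, G x⟫ := by
    intro x
    have h1 : (β * ‖x‖ ^ 2) ^ (1 - μ / 2)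
        ≤ (‖(ContinuousLinearMap.adjoint B) x‖ ^ 2) ^ (1 - μ / 2) :=
      Real.rpow_le_rpow (by positivity) (hB x) hp.le
    rw [Real.mul_rpow hβ.le (by positivity)] at h1
    refine h1.trans ?_
    rw [hG]
    split_ifs with hb
    · have hb' : 0 < ‖(ContinuousLinearMap.adjoint B) x‖ := norm_pos_iff.mpr hb
      rw [real_inner_smul_right, ← ContinuousLinearMap.adjoint_inner_left,
        real_inner_self_eq_norm_sq, ← Real.rpow_natCast, ← Real.rpow_mul hb'.le,
        ← Real.rpow_add hb']
      apply le_of_eq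
      congr 1
      push_cast
      ring
    · have hb0 : (ContinuousLinearMap.adjoint B) x = 0 := by simpa using hb
      rw [hb0]
      simp [Real.zero_rpow hp.ne']
  have hder : ∀ t : ℝ, 0 ≤ t → ∃ d : ℝ, HasDerivAt (fun s => ‖y s‖ ^ 2) d t ∧
      d ≤ -2 * (β ^ (1 - μ / 2) * (‖y t‖ ^ 2) ^ (1 - μ / 2)) := by
    intro t ht
    refine ⟨_, (hy t ht).norm_sq, ?_⟩
    have h1 := hin (y t)
    have h2 := hA₀ (y t)
    have h3 : f (y t) * ‖y t‖ ^ 2 ≤ 0 := mul_nonpos_of_nonpos_of_nonneg (hf _) (by positivity)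
    rw [inner_sub_right, inner_add_right, real_inner_smul_right, real_inner_self_eq_norm_sq]
    linarith
  have hanti : AntitoneOn (fun s => ‖y s‖ ^ 2) (Set.Ici 0) := by
    apply antitoneOn_of_deriv_nonpos (convex_Ici 0)
    · intro t ht
      obtain ⟨d, hd, -⟩ := hder t ht
      exact hd.continuousAt.continuousWithinAt
    · intro t ht
      rw [interior_Ici] at ht
      obtain ⟨d, hd, -⟩ := hder t (le_of_lt ht)
      exact hd.differentiableAt.differentiableWithinAt
    · intro t ht
      rw [interior_Ici] at ht
      obtain ⟨d, hd, hd'⟩ := hder t (le_of_lt ht)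
      rw [hd.deriv]
      have : 0 ≤ β ^ (1 - μ / 2) * (‖y t‖ ^ 2) ^ (1 - μ / 2) := by positivity
      linarith
  have hW : ∀ s, (‖y s‖ ^ 2) ^ (μ / 2) = ‖y s‖ ^ μ := by
    intro s
    rw [← Real.rpow_natCast, ← Real.rpow_mul (norm_nonneg _)]
    congr 1
    push_cast
    ring
  have key : ∀ t : ℝ, 0 ≤ t → y t ≠ 0 →
      ‖y t‖ ^ μ ≤ ‖y 0‖ ^ μ - β ^ (1 - μ / 2) * μ * t := by
    intro t ht hyt
    have hpos : ∀ s ∈ Set.Icc 0 t, 0 < ‖y s‖ ^ 2 := by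
      intro s hs
      have h1 : ‖y t‖ ^ 2 ≤ ‖y s‖ ^ 2 := hanti (Set.mem_Ici.mpr hs.1) (Set.mem_Ici.mpr ht) hs.2
      have h2 : 0 < ‖y t‖ := norm_pos_iff.mpr hyt
      have h3 : 0 < ‖y t‖ ^ 2 := by positivity
      linarith
    have hd2 : ∀ s ∈ Set.Icc 0 t, ∃ d : ℝ,
        HasDerivAt (fun s => (‖y s‖ ^ 2) ^ (μ / 2) + β ^ (1 - μ / 2) * μ * s) d s ∧ d ≤ 0 := by
      intro s hs
      obtain ⟨d, hd, hd'⟩ := hder s hs.1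
      have hV := hpos s hs
      refine ⟨_, (hd.rpow_const (p := μ / 2) (Or.inl hV.ne')).add
        ((hasDerivAt_id s).const_mul (β ^ (1 - μ / 2) * μ)), ?_⟩
      have hone : (‖y s‖ ^ 2) ^ (1 - μ / 2) * (‖y s‖ ^ 2) ^ (μ / 2 - 1) = 1 := by
        rw [← Real.rpow_add hV]
        simp
      have hq : 0 < μ / 2 * (‖y s‖ ^ 2) ^ (μ / 2 - 1) :=
        mul_pos (by linarith) (Real.rpow_pos_of_pos hV _)
      have h5 := mul_le_mul_of_nonneg_right hd' hq.le
      have h6 : -2 * (β ^ (1 - μ / 2) * (‖y s‖ ^ 2) ^ (1 - μ / 2)) *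
          (μ / 2 * (‖y s‖ ^ 2) ^ (μ / 2 - 1)) = -(β ^ (1 - μ / 2) * μ) := by
        linear_combination (-(β ^ (1 - μ / 2) * μ)) * hone
      linarith
    have ha2 : AntitoneOn (fun s => (‖y s‖ ^ 2) ^ (μ / 2) + β ^ (1 - μ / 2) * μ * s)
        (Set.Icc 0 t) := by
      apply antitoneOn_of_deriv_nonpos (convex_Icc 0 t)
      · intro s hs
        obtain ⟨d, hd, -⟩ := hd2 s hs
        exact hd.continuousAt.continuousWithinAt
      · intro s hs
        obtain ⟨d, hd, -⟩ := hd2 s (interior_subset hs)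
        exact hd.differentiableAt.differentiableWithinAt
      · intro s hs
        obtain ⟨d, hd, hd'⟩ := hd2 s (interior_subset hs)
        rw [hd.deriv]
        exact hd'
    have h := ha2 (Set.left_mem_Icc.mpr ht) (Set.right_mem_Icc.mpr ht) ht
    simp only [hW] at h
    linarith
  have hcm : 0 < β ^ (1 - μ / 2) * μ := mul_pos hc hμ0
  have hT' : β ^ (1 - μ / 2) * μ * T = ‖y 0‖ ^ μ := by
    rw [hT]
    exact mul_div_cancel₀ _ hcm.ne'
  have hT0 : 0 ≤ T := by
    rw [hT]
    positivity
  constructor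
  · intro t ht
    by_cases h0 : y t = 0
    · rw [h0, norm_zero, Real.zero_rpow hμ0.ne']
      have := mul_le_mul_of_nonneg_left ht.2 hcm.le
      linarith
    · exact key t ht.1 h0
  · intro t ht
    by_contra h0
    have h1 := key t (hT0.trans ht) h0
    have h2 : 0 < ‖y t‖ ^ μ := Real.rpow_pos_of_pos (norm_pos_iff.mpr h0) _
    have := mul_le_mul_of_nonneg_left ht hcm.le
    linarith
end

section
/- Let H and U be real Hilbert spaces, B : U → H a bounded linear operator with adjoint B* : H → U, and μ ∈ (0,1). Define G : H → H by G(y) = ‖B*y‖^{−μ} B B* y if B*y ≠ 0 and G(y) = 0 if B*y = 0. Then G is a monotone operator: for all y₁, y₂ ∈ H, ⟨G(y₁) − G(y₂), y₁ − y₂⟩ ≥ 0. -/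
open scoped RealInnerProductSpace Classical

/-- Monotonicity of the feedback operator
`G(y) = ‖B*y‖^{-μ} B B* y` (with `G(y) = 0` when `B*y = 0`). -/
theorem feedback_operator_monotone
    {H U : Type*} [NormedAddCommGroup H] [InnerProductSpace ℝ H] [CompleteSpace H]
    [NormedAddCommGroup U] [InnerProductSpace ℝ U] [CompleteSpace U]
    (B : U →L[ℝ] H) (μ : ℝ) (hμ : μ ∈ Set.Ioo (0 : ℝ) 1)
    (G : H → H)
    (hG : ∀ y : H, G y =
      if (ContinuousLinearMap.adjoint B) y ≠ 0 then
        (‖(ContinuousLinearMap.adjoint B) y‖ ^ (-μ)) • B ((ContinuousLinearMap.adjoint B) y)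
      else 0) :
    ∀ y₁ y₂ : H, 0 ≤ ⟪G y₁ - G y₂, y₁ - y₂⟫ := by
  have hG' : ∀ y : H, G y =
      (‖(ContinuousLinearMap.adjoint B) y‖ ^ (-μ)) • B ((ContinuousLinearMap.adjoint B) y) := by
    intro y
    rw [hG y]
    split_ifs with h
    · rfl
    · simp only [ne_eq, not_not] at h
      simp [h]
  have hpow : ∀ t : ℝ, 0 ≤ t → t ^ (-μ) * t = t ^ (1 - μ) := by
    intro t ht
    rcases ht.eq_or_lt with h | h
    · subst h
      rw [mul_zero, Real.zero_rpow (by linarith [hμ.2])]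
    · rw [sub_eq_neg_add, Real.rpow_add h, Real.rpow_one]
  intro y₁ y₂
  rw [hG' y₁, hG' y₂, ← map_smul B, ← map_smul B, ← map_sub B,
    ← ContinuousLinearMap.adjoint_inner_right, map_sub]
  generalize (ContinuousLinearMap.adjoint B) y₁ = a
  generalize (ContinuousLinearMap.adjoint B) y₂ = b
  have ha := hpow ‖a‖ (norm_nonneg a)
  have hb := hpow ‖b‖ (norm_nonneg b)
  have hra : 0 ≤ ‖a‖ ^ (-μ) := Real.rpow_nonneg (norm_nonneg a) _
  have hrb : 0 ≤ ‖b‖ ^ (-μ) := Real.rpow_nonneg (norm_nonneg b) _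
  have hmono : 0 ≤ (‖a‖ ^ (1 - μ) - ‖b‖ ^ (1 - μ)) * (‖a‖ - ‖b‖) := by
    have h1 : 0 ≤ 1 - μ := by linarith [hμ.2]
    rcases le_total ‖a‖ ‖b‖ with h | h
    · have := Real.rpow_le_rpow (norm_nonneg a) h h1
      exact mul_nonneg_of_nonpos_of_nonpos (by linarith) (by linarith)
    · have := Real.rpow_le_rpow (norm_nonneg b) h h1
      exact mul_nonneg (by linarith) (by linarith)
  rw [← ha, ← hb] at hmono
  have hcs := mul_le_mul_of_nonneg_left (real_inner_le_norm a b) (add_nonneg hra hrb)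
  simp only [inner_sub_left, inner_sub_right, real_inner_smul_left,
    real_inner_self_eq_norm_sq, real_inner_comm a b]
  nlinarith [hmono, hcs, real_inner_comm a b]
end

section
/- Let H and U be real Hilbert spaces, B : U → H a bounded linear operator with adjoint B* : H → U, and μ ∈ (0,1). Define G : H → H by G(y) = ‖B*y‖^{−μ} B B* y if B*y ≠ 0 and G(y) = 0 if B*y = 0. Then for all y₁, y₂ ∈ H, ⟨G(y₁) − G(y₂), y₁ − y₂⟩ ≥ (‖B*y₁‖^{1−μ} − ‖B*y₂‖^{1−μ})·(‖B*y₁‖ − ‖B*y₂‖), and in particular the right-hand side is nonnegative. -/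
open scoped RealInnerProductSpace Classical

/-- Quantitative monotonicity estimate for the feedback operator
`G(y) = ‖B*y‖^{-μ} B B* y` (with `G(y) = 0` when `B*y = 0`):
`⟪G y₁ − G y₂, y₁ − y₂⟫ ≥ (a^{1−μ} − b^{1−μ})(a − b) ≥ 0`
with `a = ‖B*y₁‖`, `b = ‖B*y₂‖`. -/
theorem feedback_operator_monotone_estimate
    {H U : Type*} [NormedAddCommGroup H] [InnerProductSpace ℝ H] [CompleteSpace H]
    [NormedAddCommGroup U] [InnerProductSpace ℝ U] [CompleteSpace U]
    (B : U →L[ℝ] H) (μ : ℝ) (hμ : μ ∈ Set.Ioo (0 : ℝ) 1)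
    (G : H → H)
    (hG : ∀ y : H, G y =
      if (ContinuousLinearMap.adjoint B) y ≠ 0 then
        (‖(ContinuousLinearMap.adjoint B) y‖ ^ (-μ)) • B ((ContinuousLinearMap.adjoint B) y)
      else 0) :
    ∀ y₁ y₂ : H,
      (‖(ContinuousLinearMap.adjoint B) y₁‖ ^ (1 - μ) -
          ‖(ContinuousLinearMap.adjoint B) y₂‖ ^ (1 - μ)) *
        (‖(ContinuousLinearMap.adjoint B) y₁‖ - ‖(ContinuousLinearMap.adjoint B) y₂‖) ≤
        ⟪G y₁ - G y₂, y₁ - y₂⟫ ∧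
      0 ≤ (‖(ContinuousLinearMap.adjoint B) y₁‖ ^ (1 - μ) -
          ‖(ContinuousLinearMap.adjoint B) y₂‖ ^ (1 - μ)) *
        (‖(ContinuousLinearMap.adjoint B) y₁‖ - ‖(ContinuousLinearMap.adjoint B) y₂‖) := by
  intro y₁ y₂
  have h1 : 0 < 1 - μ := by linarith [hμ.2]
  have hG' : ∀ y : H, G y = (‖(ContinuousLinearMap.adjoint B) y‖ ^ (-μ)) •
      B ((ContinuousLinearMap.adjoint B) y) := by
    intro y
    rw [hG y]
    split_ifs with h
    · rfl
    · have h0 : (ContinuousLinearMap.adjoint B) y = 0 := not_not.mp h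
      rw [h0, map_zero, smul_zero]
  have hpow : ∀ a : ℝ, 0 ≤ a → a ^ (1 - μ) = a ^ (-μ) * a := by
    intro a ha
    rcases ha.eq_or_lt with h | h
    · rw [← h, Real.zero_rpow h1.ne', mul_zero]
    · rw [show (1 - μ) = -μ + 1 by ring, Real.rpow_add h, Real.rpow_one]
  have hin : ∀ (u : U) (y : H), ⟪B u, y⟫ = ⟪u, (ContinuousLinearMap.adjoint B) y⟫ := by
    intro u y
    rw [ContinuousLinearMap.adjoint_inner_right]
  constructor
  · rw [hpow _ (norm_nonneg _), hpow _ (norm_nonneg _), hG' y₁, hG' y₂]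
    rw [inner_sub_left, real_inner_smul_left, real_inner_smul_left, hin, hin, map_sub,
      inner_sub_right, inner_sub_right, real_inner_self_eq_norm_sq, real_inner_self_eq_norm_sq]
    generalize (ContinuousLinearMap.adjoint B) y₁ = u
    generalize (ContinuousLinearMap.adjoint B) y₂ = v
    have hs : ⟪v, u⟫ = ⟪u, v⟫ := real_inner_comm u v
    rw [hs]
    have hc := real_inner_le_norm u v
    have hu : 0 ≤ ‖u‖ ^ (-μ) := Real.rpow_nonneg (norm_nonneg _) _
    have hv : 0 ≤ ‖v‖ ^ (-μ) := Real.rpow_nonneg (norm_nonneg _) _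
    have e := mul_le_mul_of_nonneg_left hc (add_nonneg hu hv)
    nlinarith [e]
  · rcases le_total ‖(ContinuousLinearMap.adjoint B) y₁‖ ‖(ContinuousLinearMap.adjoint B) y₂‖
      with h | h
    · exact mul_nonneg_of_nonpos_of_nonpos
        (sub_nonpos.2 (Real.rpow_le_rpow (norm_nonneg _) h h1.le)) (sub_nonpos.2 h)
    · exact mul_nonneg (sub_nonneg.2 (Real.rpow_le_rpow (norm_nonneg _) h h1.le))
        (sub_nonneg.2 h)
end

section
/- Let H and U be real Hilbert spaces, B : U → H a bounded linear operator with adjoint B* : H → U, μ ∈ (0,1), and β > 0 such that ‖B*y‖² ≥ β‖y‖² for all y ∈ H. Define G : H → H by G(y) = ‖B*y‖^{−μ} B B* y if B*y ≠ 0 and G(y) = 0 if B*y = 0. Let A₀ : H → H satisfy ⟨x, A₀x⟩ ≤ 0 for all x ∈ H and let f : H → ℝ satisfy f(x) ≤ 0 for all x ∈ H. Then for all y ∈ H, ⟨y, A₀y + f(y)·y − G(y)⟩ ≤ −β^{1−μ/2}‖y‖^{2−μ}. -/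
open scoped RealInnerProductSpace Classical

/-- Pointwise Lyapunov dissipation inequality for the closed-loop operator:
`⟪y, A₀ y + f(y) y − G(y)⟫ ≤ −β^{1−μ/2} ‖y‖^{2−μ}`. -/
theorem closed_loop_dissipation_inequality
    {H U : Type*} [NormedAddCommGroup H] [InnerProductSpace ℝ H] [CompleteSpace H]
    [NormedAddCommGroup U] [InnerProductSpace ℝ U] [CompleteSpace U]
    (B : U →L[ℝ] H) (μ β : ℝ) (hμ : μ ∈ Set.Ioo (0 : ℝ) 1) (hβ : 0 < β)
    (hB : ∀ y : H, β * ‖y‖ ^ 2 ≤ ‖(ContinuousLinearMap.adjoint B) y‖ ^ 2)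
    (G : H → H)
    (hG : ∀ y : H, G y =
      if (ContinuousLinearMap.adjoint B) y ≠ 0 then
        (‖(ContinuousLinearMap.adjoint B) y‖ ^ (-μ)) • B ((ContinuousLinearMap.adjoint B) y)
      else 0)
    (A₀ : H → H) (hA₀ : ∀ x : H, ⟪x, A₀ x⟫ ≤ 0)
    (f : H → ℝ) (hf : ∀ x : H, f x ≤ 0) :
    ∀ y : H, ⟪y, A₀ y + f y • y - G y⟫ ≤ -(β ^ (1 - μ / 2)) * ‖y‖ ^ (2 - μ) := by
  intro y
  obtain ⟨hμ0, hμ1⟩ := hμ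
  have key : ⟪y, G y⟫ = ‖(ContinuousLinearMap.adjoint B) y‖ ^ (2 - μ) := by
    rw [hG y]
    by_cases h : (ContinuousLinearMap.adjoint B) y = 0
    · rw [if_neg (not_not.mpr h), h, norm_zero, inner_zero_right,
        Real.zero_rpow (by linarith)]
    · have hpos : 0 < ‖(ContinuousLinearMap.adjoint B) y‖ := norm_pos_iff.mpr h
      rw [if_pos h, real_inner_smul_right, ← ContinuousLinearMap.adjoint_inner_left,
        real_inner_self_eq_norm_sq, sub_eq_neg_add, Real.rpow_add hpos, Real.rpow_two]
  have pw : ∀ a : ℝ, 0 ≤ a → (a ^ 2) ^ (1 - μ / 2) = a ^ (2 - μ) := by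
    intro a ha
    rw [← Real.rpow_two, ← Real.rpow_mul ha]
    congr 1
    ring
  have h1 := Real.rpow_le_rpow (by positivity) (hB y) (by linarith : 0 ≤ 1 - μ / 2)
  rw [Real.mul_rpow hβ.le (by positivity), pw _ (norm_nonneg _), pw _ (norm_nonneg _)] at h1
  have h2 : f y * ‖y‖ ^ 2 ≤ 0 := mul_nonpos_of_nonpos_of_nonneg (hf y) (by positivity)
  have h3 := hA₀ y
  rw [inner_sub_right, inner_add_right, real_inner_smul_right, real_inner_self_eq_norm_sq, key]
  linarith
end
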